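/- Let Y be a Hausdorff space with a strictly increasing closed cover {B_n}_{n∈ℕ}, and let X be a Hausdorff space. The following are equivalent: (a) X is a Nagata-space; (b) to each closed set F ⊆ X one can assign a lower semi-continuous set-valued map φ_F : X → F(Y) satisfying (G) F = ⋂_{n∈ℕ} φ_F^{-1}[Y∖B_n] for every closed F, (m) F₁ ⊆ F₂ implies φ_{F₁}(x) ⊆ φ_{F₂}(x) for every x, (b_S) for every x ∈ X and closed F with x ∉ F there exists n ∈ ℕ with F ⊆ φ_{{x}}^#[B_n], and (⋄) for every closed F, each x ∉ F has an open neighborhood O and an n ∈ ℕ with O ⊆ φ_F^#[B_n]; (c) to each closed set F ⊆ X one can assign a lower semi-continuous set-valued map φ_F : X → F(Y) satisfying (G), (m), (b_S) as in (b), and (b_C) for every closed F and every compact K with F ∩ K = ∅ there exists n ∈ ℕ with K ⊆ φ_F^#[B_n]. -/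

import Mathlib

/-!
The link between g-functions and set-valued maps is the decreasing sequence of open sets attached
to a closed set `F`.

* Given a Nagata g-function `g`, put `U n F = ⋃ z ∈ F, g n z`. The Nagata condition implies
  that each `x ∉ F` has some `n` with `g n x` disjoint from `U n F` (`nagata_separation`). The map
  `φ F x = ⋂ {B n | x ∉ U n F}` (`coverMap`) takes the value `B 0` off `U 0 F`, `B (n + 1)` on
  `U n F \ U (n + 1) F`, and the value `Y` on `⋂ n, U n F = F`; it is
  lower semi-continuous since `U n F` is open and `B` increases.
* The locally uniform bound gives the bound on compact sets by a finite subcover.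
* Conversely, `g n x = {y | φ {x} y ⊄ B n}` is a g-function whose sets `g n x` form a local base at
  `x`, by the bound on `φ {x}` over each closed set missing `x`. If `y n ∈ g n x ∩ g n (u n)`,
  then `y` converges to `x`. Were `x` not a cluster point of `u`, some closed `F` would miss `x` and
  contain `u n` for all large `n`; by monotonicity
  `φ F (y n) ⊄ B n`, which contradicts the bound on the compact set formed by `x` and a tail of `y`.
-/

open Set Filter Topology TopologicalSpace

/-- A strictly increasing closed cover of `Y`. -/
def SICC {Y : Type*} [TopologicalSpace Y] (B : ℕ → Set Y) : Prop :=
  (∀ n, IsClosed (B n)) ∧ (⋃ n, B n) = Set.univ ∧ (B 0).Nonempty ∧ ∀ n, B n ⊂ B (n + 1)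

/-- A lower semi-continuous set-valued map with nonempty closed values. -/
def LSCMap {X Y : Type*} [TopologicalSpace X] [TopologicalSpace Y] (φ : X → Set Y) : Prop :=
  (∀ x, (φ x).Nonempty ∧ IsClosed (φ x)) ∧
    ∀ V : Set Y, IsOpen V → IsOpen {x | (φ x ∩ V).Nonempty}

/-- A g-function for `X`. -/
def IsGFunction {X : Type*} [TopologicalSpace X] (g : ℕ → X → Set X) : Prop :=
  (∀ n x, IsOpen (g n x)) ∧ (∀ n x, x ∈ g n x) ∧ ∀ n x, g (n + 1) x ⊆ g n x

/-- `X` is a Nagata-space. -/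
def NagataSpace (X : Type*) [TopologicalSpace X] : Prop :=
  ∃ g : ℕ → X → Set X, IsGFunction g ∧
    ∀ (x : X) (u : ℕ → X), (∀ n, (g n x ∩ g n (u n)).Nonempty) →
      MapClusterPt x atTop u

/-- The sets `U n = ⋃ z ∈ F, g n z` around `F`. -/
def gNhd {X : Type*} (g : ℕ → X → Set X) (F : Set X) (n : ℕ) : Set X :=
  {x | ∃ z ∈ F, x ∈ g n z}

/-- The intersection of those `B n` for which `x` is outside the `n`-th neighbourhood of `F`;
it is all of `Y` when `x` lies in every neighbourhood. -/
def coverMap {X Y : Type*} (B : ℕ → Set Y) (g : ℕ → X → Set X) (F : Set X) (x : X) : Set Y :=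
  {y | ∀ n, x ∉ gNhd g F n → y ∈ B n}

section Helpers

variable {X Y : Type*}

lemma SICC.monotone [TopologicalSpace Y] {B : ℕ → Set Y} (hB : SICC B) : Monotone B :=
  monotone_nat_of_le_succ fun n => (hB.2.2.2 n).subset

lemma SICC.exists_notMem [TopologicalSpace Y] {B : ℕ → Set Y} (hB : SICC B) (n : ℕ) :
    ∃ y, y ∉ B n := by
  obtain ⟨y, -, hy⟩ := exists_of_ssubset (hB.2.2.2 n)
  exact ⟨y, hy⟩

lemma gNhd_antitone [TopologicalSpace X] {g : ℕ → X → Set X} (hg : IsGFunction g) (F : Set X) :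
    Antitone (gNhd g F) :=
  antitone_nat_of_succ_le fun n _ ⟨z, hz, hx⟩ => ⟨z, hz, hg.2.2 n z hx⟩

lemma isOpen_gNhd [TopologicalSpace X] {g : ℕ → X → Set X} (hg : IsGFunction g) (F : Set X)
    (n : ℕ) : IsOpen (gNhd g F n) := by
  have : gNhd g F n = ⋃ z ∈ F, g n z := by ext; simp [gNhd]
  rw [this]
  exact isOpen_biUnion fun z _ => hg.1 n z

lemma coverMap_subset {B : ℕ → Set Y} {g : ℕ → X → Set X} {F : Set X} {x : X} {n : ℕ}
    (h : x ∉ gNhd g F n) : coverMap B g F x ⊆ B n :=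
  fun _ hy => hy n h

lemma lscMap_coverMap [TopologicalSpace X] [TopologicalSpace Y] {B : ℕ → Set Y} (hB : SICC B)
    {g : ℕ → X → Set X} (hg : IsGFunction g) (F : Set X) : LSCMap (coverMap B g F) := by
  refine ⟨fun x => ⟨?_, ?_⟩, fun V _ => ?_⟩
  · obtain ⟨y, hy⟩ := hB.2.2.1
    exact ⟨y, fun n _ => hB.monotone (Nat.zero_le n) hy⟩
  · have : coverMap B g F x = ⋂ n, ⋂ (_ : x ∉ gNhd g F n), B n := by
      ext; simp [coverMap]
    rw [this]
    exact isClosed_iInter fun n => isClosed_iInter fun _ => hB.1 n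
  · rw [isOpen_iff_forall_mem_open]
    rintro x ⟨y, hyx, hyV⟩
    classical
    have hex : ∃ m, y ∈ B m := by
      have : y ∈ ⋃ n, B n := hB.2.1 ▸ mem_univ y
      simpa using this
    -- The least `m` with `y ∈ B m` decides on which points of `X` the value contains `y`.
    rcases hm : Nat.find hex with _ | m
    · have h0 : y ∈ B 0 := hm ▸ Nat.find_spec hex
      exact ⟨univ, fun x' _ => ⟨y, fun n _ => hB.monotone (Nat.zero_le n) h0, hyV⟩,
        isOpen_univ, mem_univ x⟩
    · have h1 : y ∈ B (m + 1) := hm ▸ Nat.find_spec hex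
      have h2 : y ∉ B m := Nat.find_min hex (by omega)
      refine ⟨gNhd g F m, fun x' hx' => ⟨y, fun n hn => ?_, hyV⟩, isOpen_gNhd hg F m, ?_⟩
      · refine hB.monotone ?_ h1
        by_contra hlt
        exact hn (gNhd_antitone hg F (by omega : n ≤ m) hx')
      · by_contra hx
        exact h2 (hyx m hx)

/-- The Nagata condition, read as a separation property of points from closed sets. -/
lemma nagata_separation [TopologicalSpace X] {g : ℕ → X → Set X}
    (hN : ∀ (x : X) (u : ℕ → X), (∀ n, (g n x ∩ g n (u n)).Nonempty) → MapClusterPt x atTop u)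
    {F : Set X} (hF : IsClosed F) {x : X} (hx : x ∉ F) :
    ∃ n, ∀ y ∈ g n x, y ∉ gNhd g F n := by
  by_contra! h
  choose y hy z hz hyz using h
  exact hx (hF.mem_of_mapClusterPt (hN x z fun n => ⟨y n, hy n, hyz n⟩) (Eventually.of_forall hz))

/-- A locally uniform bound by the increasing sequence `B` is uniform on compact sets. -/
lemma exists_bound_of_isCompact [TopologicalSpace X] {B : ℕ → Set Y} (hB : Monotone B)
    {ψ : X → Set Y} {K : Set X} (hK : IsCompact K)
    (h : ∀ x ∈ K, ∃ O : Set X, IsOpen O ∧ x ∈ O ∧ ∃ n : ℕ, O ⊆ {y | ψ y ⊆ B n}) :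
    ∃ n : ℕ, K ⊆ {x | ψ x ⊆ B n} := by
  refine hK.induction_on (p := fun s => ∃ n : ℕ, s ⊆ {x | ψ x ⊆ B n})
    ⟨0, empty_subset _⟩ ?_ ?_ ?_
  · rintro s t hst ⟨n, hn⟩
    exact ⟨n, hst.trans hn⟩
  · rintro s t ⟨n, hn⟩ ⟨m, hm⟩
    exact ⟨max n m, union_subset (fun x hx => (hn hx).trans (hB (le_max_left n m)))
      fun x hx => (hm hx).trans (hB (le_max_right n m))⟩
  · intro x hx
    obtain ⟨O, hO, hxO, n, hn⟩ := h x hx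
    exact ⟨O, mem_nhdsWithin_of_mem_nhds (hO.mem_nhds hxO), n, hn⟩

end Helpers

theorem statement13 {X Y : Type*} [TopologicalSpace X] [T2Space X]
    [TopologicalSpace Y] [T2Space Y] (B : ℕ → Set Y) (hB : SICC B) :
    List.TFAE
      [NagataSpace X,
       ∃ φ : Set X → X → Set Y,
        (∀ F : Set X, IsClosed F → LSCMap (φ F)) ∧
        (∀ F : Set X, IsClosed F → F = ⋂ n, {x | (φ F x ∩ (B n)ᶜ).Nonempty}) ∧
        (∀ F₁ F₂ : Set X, IsClosed F₁ → IsClosed F₂ → F₁ ⊆ F₂ →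
          ∀ x, φ F₁ x ⊆ φ F₂ x) ∧
        (∀ (x : X) (F : Set X), IsClosed F → x ∉ F →
          ∃ n : ℕ, F ⊆ {y | φ ({x} : Set X) y ⊆ B n}) ∧
        (∀ F : Set X, IsClosed F → ∀ x ∉ F,
          ∃ O : Set X, IsOpen O ∧ x ∈ O ∧ ∃ n : ℕ, O ⊆ {y | φ F y ⊆ B n}),
       ∃ φ : Set X → X → Set Y,
        (∀ F : Set X, IsClosed F → LSCMap (φ F)) ∧
        (∀ F : Set X, IsClosed F → F = ⋂ n, {x | (φ F x ∩ (B n)ᶜ).Nonempty}) ∧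
        (∀ F₁ F₂ : Set X, IsClosed F₁ → IsClosed F₂ → F₁ ⊆ F₂ →
          ∀ x, φ F₁ x ⊆ φ F₂ x) ∧
        (∀ (x : X) (F : Set X), IsClosed F → x ∉ F →
          ∃ n : ℕ, F ⊆ {y | φ ({x} : Set X) y ⊆ B n}) ∧
        (∀ (F K : Set X), IsClosed F → IsCompact K → F ∩ K = ∅ →
          ∃ n : ℕ, K ⊆ {x | φ F x ⊆ B n})] := by
  have hmono := hB.monotone
  tfae_have 1 → 2 := by
    rintro ⟨g, hg, hN⟩
    refine ⟨coverMap B g, fun F _ => lscMap_coverMap hB hg F, fun F hF => ?_, ?_, ?_, ?_⟩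
    · ext x
      simp only [mem_iInter, mem_ofPred_eq]
      refine ⟨fun hx n => ?_, fun h => ?_⟩
      · obtain ⟨y, hy⟩ := hB.exists_notMem n
        exact ⟨y, fun k hk => absurd ⟨x, hx, hg.2.1 k x⟩ hk, hy⟩
      · by_contra hx
        obtain ⟨n, hn⟩ := nagata_separation hN hF hx
        obtain ⟨y, hy, hyn⟩ := h n
        exact hyn (coverMap_subset (hn x (hg.2.1 n x)) hy)
    · rintro F₁ F₂ - - h12 x y hy n hn
      exact hy n fun ⟨z, hz, hxz⟩ => hn ⟨z, h12 hz, hxz⟩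
    · intro x F hF hx
      obtain ⟨n, hn⟩ := nagata_separation hN hF hx
      refine ⟨n, fun y hy => coverMap_subset ?_⟩
      rintro ⟨z, rfl, hyz⟩
      exact hn y hyz ⟨y, hy, hg.2.1 n y⟩
    · intro F hF x hx
      obtain ⟨n, hn⟩ := nagata_separation hN hF hx
      exact ⟨g n x, hg.1 n x, hg.2.1 n x, n, fun y hy => coverMap_subset (hn y hy)⟩
  tfae_have 2 → 3 := by
    rintro ⟨φ, h1, h2, h3, h4, h5⟩
    refine ⟨φ, h1, h2, h3, h4, fun F K hF hK hFK => exists_bound_of_isCompact hmono hK ?_⟩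
    exact fun x hx => h5 F hF x fun hxF => (hFK ▸ mem_inter hxF hx : x ∈ (∅ : Set X))
  tfae_have 3 → 1 := by
    rintro ⟨φ, h1, h2, h3, h4, h5⟩
    refine ⟨fun n x => {y | (φ {x} y ∩ (B n)ᶜ).Nonempty}, ⟨?_, ?_, ?_⟩, ?_⟩
    · exact fun n x => (h1 {x} isClosed_singleton).2 _ (hB.1 n).isOpen_compl
    · intro n x
      have hx : x ∈ ({x} : Set X) := rfl
      rw [h2 {x} isClosed_singleton] at hx
      exact mem_iInter.1 hx n
    · rintro n x y ⟨z, hz, hzn⟩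
      exact ⟨z, hz, fun h => hzn (hmono n.le_succ h)⟩
    · intro x u hu
      choose y hyx hyu using hu
      have hlim : Tendsto y atTop (𝓝 x) := by
        rw [tendsto_nhds]
        intro V hV hxV
        obtain ⟨n, hn⟩ := h4 x Vᶜ hV.isClosed_compl (fun h => h hxV)
        filter_upwards [eventually_ge_atTop n] with k hk
        by_contra hkV
        obtain ⟨z, hz, hzk⟩ := hyx k
        exact hzk (hmono hk (hn hkV hz))
      by_contra hcl
      rw [mapClusterPt_iff_frequently] at hcl
      push Not at hcl
      obtain ⟨s, hs, hus⟩ := hcl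
      obtain ⟨V, hVs, hV, hxV⟩ := mem_nhds_iff.1 hs
      have hyV : ∀ᶠ n in atTop, y n ∈ V := hlim (hV.mem_nhds hxV)
      obtain ⟨N, hN⟩ := eventually_atTop.1 (hus.and hyV)
      have hK : IsCompact (insert x (range fun k => y (k + N))) :=
        ((tendsto_add_atTop_iff_nat N).2 hlim).isCompact_insert_range
      obtain ⟨m, hm⟩ := h5 Vᶜ _ hV.isClosed_compl hK (by
        rw [eq_empty_iff_forall_notMem]
        rintro z ⟨hzV, rfl | ⟨k, rfl⟩⟩
        · exact hzV hxV
        · exact hzV (hN (k + N) (by omega)).2)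
      -- At the index `m + N`, the point of the tail of `y` violates the bound `B m`.
      obtain ⟨z, hz, hzm⟩ := hyu (m + N)
      have hsub : ({u (m + N)} : Set X) ⊆ Vᶜ :=
        singleton_subset_iff.2 fun h => (hN (m + N) (by omega)).1 (hVs h)
      have hz' := h3 _ _ isClosed_singleton hV.isClosed_compl hsub _ hz
      exact hzm (hmono (by omega) (hm (mem_insert_of_mem _ ⟨m, rfl⟩) hz'))
  tfae_finish
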